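/- For all integers d,k ≥ 1 and n ≥ 0 we have M^d_{k−1,n} ≤ C^d_{k,n} ≤ M^d_{k,n}. -/

import Mathlib

/-- Full binary trees (every internal node has exactly two children). -/
inductive BTree : Type
  | leaf : BTree
  | node : BTree → BTree → BTree
deriving DecidableEq

namespace BTree

/-- Number of leaves of a full binary tree. -/
def numLeaves : BTree → ℕ
  | leaf => 1
  | node l r => l.numLeaves + r.numLeaves

/-- The list of pairs (left depth, right depth) of the leaves, in preorder. -/
def leafDepths : BTree → List (ℕ × ℕ)
  | leaf => [(0, 0)]
  | node l r =>
      (l.leafDepths.map fun p => (p.1 + 1, p.2)) ++ (r.leafDepths.map fun p => (p.1, p.2 + 1))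

/-- The left depth sequence `ld(t)` of the leaves of `t`, in preorder. -/
def ld (t : BTree) : List ℕ := t.leafDepths.map Prod.fst

/-- The right depth sequence `rd(t)` of the leaves of `t`, in preorder. -/
def rd (t : BTree) : List ℕ := t.leafDepths.map Prod.snd

end BTree

/-- `b ~^d c` : the sequences have equal length and agree at every position where
either entry is `< d`. -/
def DepthEq (d : ℕ) : List ℕ → List ℕ → Prop :=
  List.Forall₂ (fun a b => min a b < d → a = b)

/-- `b ~_k c` : entrywise congruence mod `k` (and equal length). -/
def ModListEq (k : ℕ) : List ℕ → List ℕ → Prop :=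
  List.Forall₂ (fun a b => a % k = b % k)

/-- The relation `t ~ t'` iff `ld(t) ~^d ld(t')` and `rd(t) ~^e rd(t')`. -/
def DeRel (d e : ℕ) (t t' : BTree) : Prop :=
  DepthEq d t.ld t'.ld ∧ DepthEq e t.rd t'.rd

/-- The relation `t ~ t'` iff `ld(t) ~_k^d ld(t')` (i.e. `ld(t) ~_k ld(t')` and
`ld(t) ~^d ld(t')`). -/
def DkRel (d k : ℕ) (t t' : BTree) : Prop :=
  ModListEq k t.ld t'.ld ∧ DepthEq d t.ld t'.ld

/-- `T_n`: full binary trees with `n+1` leaves. -/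
def Tn (n : ℕ) : Type := {t : BTree // t.numLeaves = n + 1}

/-- `C^{d,e}_n`: the number of equivalence classes of the relation `DeRel d e` on `T_n`. -/
noncomputable def Cde (d e n : ℕ) : ℕ :=
  Nat.card (Quot (fun t t' : Tn n => DeRel d e t.1 t'.1))

/-- `C^d_{k,n}`: the number of equivalence classes of `ld(t) ~_k^d ld(t')` on `T_n`. -/
noncomputable def Cdk (d k n : ℕ) : ℕ :=
  Nat.card (Quot (fun t t' : Tn n => DkRel d k t.1 t'.1))

/-- Directions to a left or right child. -/
inductive Dir : Type
  | L : Dir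
  | R : Dir
deriving DecidableEq

/-- The maximal subtree rooted at the node at position `p` (if such a node exists). -/
def subtreeAt : BTree → List Dir → Option BTree
  | t, [] => some t
  | BTree.leaf, _ :: _ => none
  | BTree.node l _, Dir.L :: p => subtreeAt l p
  | BTree.node _ r, Dir.R :: p => subtreeAt r p

/-- Replace the maximal subtree rooted at position `p` by `s` (if the position exists). -/
def replaceAt : BTree → List Dir → BTree → Option BTree
  | _, [], s => some s
  | BTree.leaf, _ :: _, _ => none
  | BTree.node l r, Dir.L :: p, s => (replaceAt l p s).map fun l' => BTree.node l' r
  | BTree.node l r, Dir.R :: p, s => (replaceAt r p s).map fun r' => BTree.node l r'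

/-- `leftAssoc t₀ [t₁,…,t_m] = t₀ ∧ t₁ ∧ ⋯ ∧ t_m` with `∧` performed left to right. -/
def leftAssoc : BTree → List BTree → BTree := List.foldl BTree.node

/-- `t'` is obtained from `t` by a right `k`-rotation at the node at position `p`:
the maximal subtree `t₀ ∧ t₁ ∧ ⋯ ∧ t_{k+1}` rooted there (with `∧` performed left to
right) is replaced by `t₀ ∧ (t₁ ∧ ⋯ ∧ t_{k+1})`.  The left depth of that node is
`p.count Dir.L`. -/
def IsRightKRot (k : ℕ) (p : List Dir) (t t' : BTree) : Prop :=
  ∃ (t₀ t₁ : BTree) (rest : List BTree), rest.length = k ∧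
    subtreeAt t p = some (leftAssoc t₀ (t₁ :: rest)) ∧
    replaceAt t p (BTree.node t₀ (leftAssoc t₁ rest)) = some t'

/-- `IsTopOf s u`: `s` is a subtree of `u` rooted at the root of `u`. -/
def IsTopOf : BTree → BTree → Prop
  | BTree.leaf, _ => True
  | BTree.node l r, BTree.node l' r' => IsTopOf l l' ∧ IsTopOf r r'
  | BTree.node _ _, BTree.leaf => False

/-- `t` contains `s` at left depth `δ`: `t` has a subtree equal to `s` rooted at a node
of left depth `δ`. -/
def ContainsAt (t s : BTree) (δ : ℕ) : Prop :=
  ∃ (p : List Dir) (u : BTree), subtreeAt t p = some u ∧ p.count Dir.L = δ ∧ IsTopOf s u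

/-- `t` avoids `s` at left depth `δ`. -/
def AvoidsAt (t s : BTree) (δ : ℕ) : Prop := ¬ ContainsAt t s δ

/-- `comb_k`: the left-to-right `∧`-product of `k+1` single leaves. -/
def comb (k : ℕ) : BTree := leftAssoc BTree.leaf (List.replicate k BTree.leaf)

/-- `comb_k^1 := t₀ ∧ comb_k` with `t₀` a single leaf. -/
def comb1 (k : ℕ) : BTree := BTree.node BTree.leaf (comb k)

/-- One left `k`-rotation step, at a node of left depth at least `d-1`, from `t` to `t'`. -/
def LeftRotStep (d k : ℕ) (t t' : BTree) : Prop :=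
  ∃ p : List Dir, d - 1 ≤ p.count Dir.L ∧ IsRightKRot k p t' t

/-- The `(d;k)`-order: `s ≤ t` iff `s` is obtained from `t` by finitely many left
`k`-rotations at nodes of left depth at least `d-1`. -/
def dkLE (d k : ℕ) (s t : BTree) : Prop := Relation.ReflTransGen (LeftRotStep d k) t s

/-- `t` is `(d;k)`-minimal. -/
def dkMinimal (d k : ℕ) (t : BTree) : Prop := ∀ s, dkLE d k s t → s = t

/-- `t` is `(d;k)`-maximal. -/
def dkMaximal (d k : ℕ) (t : BTree) : Prop := ∀ s, dkLE d k t s → s = t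

/-- `M^d_{j,n}`: the number of binary trees in `T_n` avoiding `comb_{j+1}` at every left
depth at least `d-1`. -/
noncomputable def Mnum (j d n : ℕ) : ℕ :=
  Nat.card {t : BTree // t.numLeaves = n + 1 ∧ ∀ δ, d - 1 ≤ δ → AvoidsAt t (comb (j + 1)) δ}

/-- Left depths shifted by an offset. -/
def LL : BTree → ℕ → List ℕ
  | BTree.leaf, a => [a]
  | BTree.node l r, a => LL l (a + 1) ++ LL r a

/-- Length of the left spine. -/
def spine : BTree → ℕ
  | BTree.leaf => 0
  | BTree.node l _ => spine l + 1

/-- Avoidance of combs, recursively. -/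
def Good (d m : ℕ) : BTree → ℕ → Prop
  | BTree.leaf, a => d - 1 ≤ a → 0 < m
  | BTree.node l r, a =>
      (d - 1 ≤ a → spine l + 1 < m) ∧ Good d m l (a + 1) ∧ Good d m r a

/-- Entrywise relation. -/
def RR (d k : ℕ) (a b : ℕ) : Prop := a % k = b % k ∧ (min a b < d → a = b)

theorem ld_node (l r : BTree) : (BTree.node l r).ld = l.ld.map (· + 1) ++ r.ld := by
  simp [BTree.ld, BTree.leafDepths, Function.comp_def]

theorem LL_eq (t : BTree) : ∀ a, LL t a = t.ld.map (· + a) := by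
  induction t with
  | leaf => intro a; simp [LL, BTree.ld, BTree.leafDepths]
  | node l r ihl ihr =>
    intro a
    simp only [LL, ld_node, ihl, ihr, List.map_append, List.map_map]
    congr 1
    apply List.map_congr_left
    intro x _
    simp only [Function.comp]
    omega

theorem LL_zero (t : BTree) : LL t 0 = t.ld := by simp [LL_eq]

theorem spine_top (m : ℕ) : ∀ u, IsTopOf (comb m) u ↔ m ≤ spine u := by
  induction m with
  | zero => intro u; simp [comb, leftAssoc, IsTopOf]
  | succ m ih =>
    intro u
    have hc : comb (m + 1) = BTree.node (comb m) BTree.leaf := by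
      simp [comb, leftAssoc, List.replicate_succ', List.foldl_append]
    rw [hc]
    cases u with
    | leaf => simp [IsTopOf, spine]
    | node l r => simp [IsTopOf, spine, ih]

theorem good_iff (d m : ℕ) (t : BTree) : ∀ a,
    Good d m t a ↔ ∀ p u, subtreeAt t p = some u → d - 1 ≤ a + p.count Dir.L → spine u < m := by
  induction t with
  | leaf =>
    intro a
    constructor
    · intro h p u hp hd
      cases p with
      | nil => simp [subtreeAt] at hp; subst hp; simpa [spine] using h (by simpa using hd)
      | cons x p => simp [subtreeAt] at hp
    · intro h hd
      exact h [] _ rfl (by simpa using hd)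
  | node l r ihl ihr =>
    intro a
    constructor
    · rintro ⟨h1, h2, h3⟩ p u hp hd
      rw [ihl] at h2
      rw [ihr] at h3
      cases p with
      | nil => simp [subtreeAt] at hp; subst hp; simpa [spine] using h1 (by simpa using hd)
      | cons x p =>
        cases x with
        | L =>
          refine h2 p u hp ?_
          simp at hd
          omega
        | R =>
          refine h3 p u hp ?_
          simpa using hd
    · intro h
      refine ⟨fun hd => h [] _ rfl (by simpa using hd), (ihl _).2 ?_, (ihr _).2 ?_⟩
      · intro p u hp hd
        refine h (Dir.L :: p) u hp ?_
        simp
        omega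
      · intro p u hp hd
        refine h (Dir.R :: p) u hp ?_
        simpa using hd

theorem good_zero (d m : ℕ) (t : BTree) :
    Good d m t 0 ↔ ∀ δ, d - 1 ≤ δ → AvoidsAt t (comb m) δ := by
  rw [good_iff]
  constructor
  · rintro h δ hδ ⟨p, u, hp, hc, ht⟩
    rw [spine_top] at ht
    have := h p u hp (by omega)
    omega
  · intro h p u hp hd
    by_contra hc
    exact h _ (by simpa using hd) ⟨p, u, hp, rfl, (spine_top _ _).2 (by omega)⟩

theorem dk_iff (d k : ℕ) (s t : BTree) : DkRel d k s t ↔ List.Forall₂ (RR d k) s.ld t.ld := by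
  unfold DkRel ModListEq DepthEq
  generalize s.ld = x
  generalize t.ld = y
  constructor
  · rintro ⟨h1, h2⟩
    induction h1 with
    | nil => exact .nil
    | cons h _ ih =>
      cases h2 with
      | cons h' t' => exact .cons ⟨h, h'⟩ (ih t')
  · intro h
    exact ⟨h.imp fun _ _ h => h.1, h.imp fun _ _ h => h.2⟩

theorem LL_head (t : BTree) : ∀ a, ∃ X, LL t a = (a + spine t) :: X := by
  induction t with
  | leaf => intro a; exact ⟨[], rfl⟩
  | node l r ihl _ =>
    intro a
    obtain ⟨X, hX⟩ := ihl (a + 1)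
    refine ⟨X ++ LL r a, ?_⟩
    simp only [LL, hX, spine, List.cons_append]
    congr 1
    omega

theorem RR_symm {d k a b : ℕ} (h : RR d k a b) : RR d k b a :=
  ⟨h.1.symm, fun h' => (h.2 (by omega)).symm⟩

theorem RR_contra {d k a s : ℕ} (h : RR d k a (a + s)) (hs : 0 < s)
    (hk : d - 1 ≤ a → s < k) : False := by
  obtain ⟨h1, h2⟩ := h
  by_cases hd : a < d
  · have := h2 (by omega)
    omega
  · have hk := hk (by omega)
    have h3 : a + 0 ≡ a + s [MOD k] := h1
    have h4 := Nat.ModEq.add_left_cancel' a h3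
    have h5 := Nat.ModEq.eq_of_lt_of_lt h4 (by omega) hk
    omega

theorem inj_aux (d k : ℕ) (t : BTree) : ∀ (t' : BTree) (a : ℕ) (X Y : List ℕ),
    Good d k t a → Good d k t' a →
    List.Forall₂ (RR d k) (LL t a ++ X) (LL t' a ++ Y) →
    t = t' ∧ List.Forall₂ (RR d k) X Y := by
  induction t with
  | leaf =>
    intro t' a X Y _ g' h
    cases t' with
    | leaf => cases h with | cons _ h => exact ⟨rfl, h⟩
    | node l r =>
      exfalso
      obtain ⟨Z, hZ⟩ := LL_head (BTree.node l r) a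
      rw [hZ] at h
      simp only [LL, List.cons_append, List.nil_append, List.forall₂_cons] at h
      exact RR_contra h.1 (by simp [spine]) g'.1
  | node l r ihl ihr =>
    intro t' a X Y g g' h
    cases t' with
    | leaf =>
      exfalso
      obtain ⟨Z, hZ⟩ := LL_head (BTree.node l r) a
      rw [hZ] at h
      simp only [LL, List.cons_append, List.nil_append, List.forall₂_cons] at h
      exact RR_contra (RR_symm h.1) (by simp [spine]) g.1
    | node l' r' =>
      simp only [LL, List.append_assoc] at h
      obtain ⟨e1, h1⟩ := ihl _ _ _ _ g.2.1 g'.2.1 h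
      obtain ⟨e2, h2⟩ := ihr _ _ _ _ g.2.2 g'.2.2 h1
      exact ⟨by rw [e1, e2], h2⟩

theorem RR_equiv (d k : ℕ) : Equivalence (RR d k) where
  refl _ := ⟨rfl, fun _ => rfl⟩
  symm := RR_symm
  trans := by
    rintro a b c ⟨h1, h2⟩ ⟨h3, h4⟩
    refine ⟨h1.trans h3, fun h => ?_⟩
    by_cases hb : b < d
    · exact (h2 (by omega)).trans (h4 (by omega))
    · by_cases ha : a < d
      · exact (h2 (by omega)).trans (h4 (by have := h2 (by omega); omega))
      · have := h4 (by omega)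
        omega

theorem F_refl (d k : ℕ) (x : List ℕ) : List.Forall₂ (RR d k) x x :=
  List.forall₂_same.2 fun _ _ => (RR_equiv d k).refl _

theorem F_trans {d k : ℕ} {x y z : List ℕ} (h : List.Forall₂ (RR d k) x y)
    (h' : List.Forall₂ (RR d k) y z) : List.Forall₂ (RR d k) x z := by
  induction h generalizing z with
  | nil => exact h'
  | cons h _ ih =>
    cases h' with
    | cons h1 h2 => exact .cons ((RR_equiv d k).trans h h1) (ih h2)

theorem F_symm {d k : ℕ} {x y : List ℕ} (h : List.Forall₂ (RR d k) x y) :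
    List.Forall₂ (RR d k) y x := by
  induction h with
  | nil => exact .nil
  | cons h _ ih => exact .cons (RR_symm h) ih

theorem F_append {d k : ℕ} {x y x' y' : List ℕ} (h : List.Forall₂ (RR d k) x y)
    (h' : List.Forall₂ (RR d k) x' y') : List.Forall₂ (RR d k) (x ++ x') (y ++ y') := by
  induction h with
  | nil => exact h'
  | cons h _ ih => exact .cons h ih

theorem dk_equiv (d k n : ℕ) : Equivalence (fun t t' : Tn n => DkRel d k t.1 t'.1) where
  refl t := (dk_iff _ _ _ _).2 (F_refl _ _ _)
  symm h := (dk_iff _ _ _ _).2 (F_symm ((dk_iff _ _ _ _).1 h))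
  trans h h' := (dk_iff _ _ _ _).2 (F_trans ((dk_iff _ _ _ _).1 h) ((dk_iff _ _ _ _).1 h'))

theorem numLeaves_pos (t : BTree) : 0 < t.numLeaves := by
  induction t with
  | leaf => simp [BTree.numLeaves]
  | node l r _ _ => simp only [BTree.numLeaves]; omega

theorem fin_le (n : ℕ) : {t : BTree | t.numLeaves ≤ n}.Finite := by
  induction n with
  | zero =>
    convert Set.finite_empty
    ext t
    have := numLeaves_pos t
    simp
    omega
  | succ n ih =>
    refine ((Set.finite_singleton BTree.leaf).union (ih.image2 BTree.node ih)).subset ?_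
    intro t ht
    cases t with
    | leaf => left; rfl
    | node l r =>
      right
      simp only [BTree.numLeaves, Set.mem_ofPred_eq] at ht
      have := numLeaves_pos l
      have := numLeaves_pos r
      exact ⟨l, by simp; omega, r, by simp; omega, rfl⟩

theorem rot_aux (m : ℕ) : ∀ t, m + 1 ≤ spine t → ∃ t0 u : BTree,
    t.numLeaves = t0.numLeaves + u.numLeaves ∧
    ∀ a, LL t a = LL t0 (a + m + 1) ++ LL u a := by
  induction m with
  | zero =>
    intro t ht
    cases t with
    | leaf => simp [spine] at ht
    | node l r => exact ⟨l, r, rfl, fun a => rfl⟩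
  | succ m ih =>
    intro t ht
    cases t with
    | leaf => simp [spine] at ht
    | node l r =>
      obtain ⟨t0, u, h1, h2⟩ := ih l (by simp only [spine] at ht; omega)
      refine ⟨t0, BTree.node u r, by simp only [BTree.numLeaves]; omega, fun a => ?_⟩
      simp only [LL, h2, List.append_assoc]
      rw [show a + 1 + m + 1 = a + (m + 1) + 1 by omega]

theorem sum_lt (t : BTree) (a b : ℕ) (h : a < b) : (LL t a).sum < (LL t b).sum := by
  induction t generalizing a b with
  | leaf => simpa [LL] using h
  | node l r ihl ihr =>
    simp only [LL, List.sum_append]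
    have := ihl (a + 1) (b + 1) (by omega)
    have := ihr a b h
    omega

theorem F_shift (d k : ℕ) (t : BTree) : ∀ a, d ≤ a →
    List.Forall₂ (RR d k) (LL t (a + k)) (LL t a) := by
  induction t with
  | leaf =>
    intro a ha
    refine .cons ⟨by simp, fun h => ?_⟩ .nil
    omega
  | node l r ihl ihr =>
    intro a ha
    have := ihl (a + 1) (by omega)
    rw [show a + 1 + k = a + k + 1 by omega] at this
    exact F_append this (ihr a ha)

theorem step (d k : ℕ) (hk : 1 ≤ k) (t : BTree) : ∀ a, ¬ Good d (k + 1) t a →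
    ∃ t' : BTree, t'.numLeaves = t.numLeaves ∧ List.Forall₂ (RR d k) (LL t a) (LL t' a) ∧
      (LL t' a).sum < (LL t a).sum := by
  induction t with
  | leaf => intro a h; exact absurd (fun _ => Nat.succ_pos k) h
  | node l r ihl ihr =>
    intro a h
    by_cases hl : Good d (k + 1) l (a + 1)
    · by_cases hr : Good d (k + 1) r a
      · have : ¬ (d - 1 ≤ a → spine l + 1 < k + 1) := fun h' => h ⟨h', hl, hr⟩
        push Not at this
        obtain ⟨t0, u, h1, h2⟩ := rot_aux k (BTree.node l r) this.2
        refine ⟨BTree.node t0 u, h1.symm, ?_, ?_⟩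
        · rw [h2]
          have := F_shift d k t0 (a + 1) (by omega)
          rw [show a + 1 + k = a + k + 1 by omega] at this
          exact F_append this (F_refl _ _ _)
        · rw [h2]
          simp only [LL, List.sum_append]
          have := sum_lt t0 (a + 1) (a + k + 1) (by omega)
          omega
      · obtain ⟨r', h1, h2, h3⟩ := ihr _ hr
        refine ⟨BTree.node l r', by simp only [BTree.numLeaves]; omega,
          F_append (F_refl _ _ _) h2, ?_⟩
        simp only [LL, List.sum_append]
        omega
    · obtain ⟨l', h1, h2, h3⟩ := ihl _ hl
      refine ⟨BTree.node l' r, by simp only [BTree.numLeaves]; omega,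
        F_append h2 (F_refl _ _ _), ?_⟩
      simp only [LL, List.sum_append]
      omega

theorem exists_good (d k : ℕ) (hk : 1 ≤ k) (N : ℕ) : ∀ t : BTree, (LL t 0).sum ≤ N →
    ∃ t' : BTree, t'.numLeaves = t.numLeaves ∧ List.Forall₂ (RR d k) (LL t 0) (LL t' 0) ∧
      Good d (k + 1) t' 0 := by
  induction N with
  | zero =>
    intro t ht
    by_cases hg : Good d (k + 1) t 0
    · exact ⟨t, rfl, F_refl _ _ _, hg⟩
    · obtain ⟨t', _, _, h3⟩ := step d k hk t 0 hg
      omega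
  | succ N ih =>
    intro t ht
    by_cases hg : Good d (k + 1) t 0
    · exact ⟨t, rfl, F_refl _ _ _, hg⟩
    · obtain ⟨t', h1, h2, h3⟩ := step d k hk t 0 hg
      obtain ⟨s, h4, h5, h6⟩ := ih t' (by omega)
      exact ⟨s, h4.trans h1, F_trans h2 h5, h6⟩

/-- for `d,k ≥ 1` and `n ≥ 0`, `M^d_{k-1,n} ≤ C^d_{k,n} ≤ M^d_{k,n}`. -/
theorem stmt16 (d k n : ℕ) (hd : 1 ≤ d) (hk : 1 ≤ k) :
    Mnum (k - 1) d n ≤ Cdk d k n ∧ Cdk d k n ≤ Mnum k d n := by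
  have hfin : Finite (Tn n) :=
    ((fin_le (n + 1)).subset (fun t (ht : t.numLeaves = n + 1) => ht.le)).to_subtype
  constructor
  · unfold Mnum Cdk
    rw [Nat.sub_add_cancel hk]
    refine Nat.card_le_card_of_injective
      (fun t => Quot.mk _ (⟨t.1, t.2.1⟩ : Tn n)) ?_
    rintro ⟨s, hs, hs'⟩ ⟨t, ht, ht'⟩ h
    have h1 := ((dk_equiv d k n).eqvGen_iff).1 (Quot.eqvGen_exact h)
    have h2 := (dk_iff _ _ _ _).1 h1
    simp only [← LL_zero] at h2
    have h3 := inj_aux d k s t 0 [] [] ((good_zero _ _ _).2 hs') ((good_zero _ _ _).2 ht')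
      (by simpa using h2)
    exact Subtype.ext h3.1
  · unfold Mnum Cdk
    have hfin' : Finite {t : BTree // t.numLeaves = n + 1 ∧
        ∀ δ, d - 1 ≤ δ → AvoidsAt t (comb (k + 1)) δ} :=
      Finite.of_injective (β := Tn n) (fun t => (⟨t.1, t.2.1⟩ : Tn n)) (by
        intro s t h
        exact Subtype.ext (congrArg (fun x : Tn n => x.1) h))
    refine Nat.card_le_card_of_surjective
      (fun t => Quot.mk _ (⟨t.1, t.2.1⟩ : Tn n)) ?_
    intro q
    induction q using Quot.ind with
    | mk t =>
      obtain ⟨s, h1, h2, h3⟩ := exists_good d k hk _ t.1 le_rfl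
      refine ⟨⟨s, h1.trans t.2, (good_zero _ _ _).1 h3⟩, ?_⟩
      apply Quot.sound
      simp only [LL_zero] at h2
      exact (dk_iff _ _ _ _).2 (F_symm h2)
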